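/- Let f : [-π,π] → ℂ^{s×s} belong to L¹([-π,π]; ℂ^{s×s}) and assume f(θ) is a Hermitian matrix for almost every θ. Then the sequence of block Toeplitz matrices {T_n(f)}_n satisfies {T_n(f)}_n ∼_λ f. -/

import Mathlib

open MeasureTheory Filter Topology Matrix
open scoped Real

noncomputable section

/-- Sum of `F` over the eigenvalues (with multiplicity) of a square complex matrix,
the eigenvalues being the roots of the characteristic polynomial. -/
def eigSum {ι : Type*} [Fintype ι] [DecidableEq ι] (F : ℂ → ℂ) (A : Matrix ι ι ℂ) : ℂ :=
  (A.charpoly.roots.map F).sum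

/-- Sum of `F` over the singular values `σ_1, …, σ_{min(#rows,#cols)}` of a rectangular
complex matrix: the singular values are the square roots of the eigenvalues of `A * Aᴴ`,
discarding the `#rows - min(#rows,#cols)` superfluous zero ones. -/
def svSum {m n : Type*} [Fintype m] [Fintype n] [DecidableEq m]
    (F : ℝ → ℂ) (A : Matrix m n ℂ) : ℂ :=
  (∑ i, F (Real.sqrt ((Matrix.isHermitian_mul_conjTranspose_self A).eigenvalues i))) -
    ((Fintype.card m - min (Fintype.card m) (Fintype.card n) : ℕ) : ℂ) * F 0

/-- `{A_n}_n ∼_σ f` : the matrix-sequence `A` is distributed as the matrix-valued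
symbol `f : Ω → ℂ^{ρ×τ}` in the sense of the singular values (Weyl sense). -/
def DistributedSV {Θ : Type*} [MeasureSpace Θ] (Ω : Set Θ)
    {ρ τ : Type*} [Fintype ρ] [Fintype τ] [DecidableEq ρ]
    (f : Θ → Matrix ρ τ ℂ)
    {ι κ : ℕ → Type} [∀ n, Fintype (ι n)] [∀ n, Fintype (κ n)] [∀ n, DecidableEq (ι n)]
    (A : ∀ n, Matrix (ι n) (κ n) ℂ) : Prop :=
  ∀ F : ℝ → ℂ, Continuous F → HasCompactSupport F →
    Tendsto
      (fun n => ((min (Fintype.card (ι n)) (Fintype.card (κ n)) : ℕ) : ℂ)⁻¹ * svSum F (A n))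
      atTop
      (𝓝 (((volume Ω).toReal : ℂ)⁻¹ *
        ∫ θ in Ω, ((min (Fintype.card ρ) (Fintype.card τ) : ℕ) : ℂ)⁻¹ * svSum F (f θ)))

/-- `{A_n}_n ∼_λ f` : the matrix-sequence `A` is distributed as the matrix-valued
symbol `f : Ω → ℂ^{ρ×ρ}` in the sense of the eigenvalues (Weyl sense). -/
def DistributedEig {Θ : Type*} [MeasureSpace Θ] (Ω : Set Θ)
    {ρ : Type*} [Fintype ρ] [DecidableEq ρ]
    (f : Θ → Matrix ρ ρ ℂ)
    {ι : ℕ → Type} [∀ n, Fintype (ι n)] [∀ n, DecidableEq (ι n)]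
    (A : ∀ n, Matrix (ι n) (ι n) ℂ) : Prop :=
  ∀ F : ℂ → ℂ, Continuous F → HasCompactSupport F →
    Tendsto (fun n => ((Fintype.card (ι n) : ℕ) : ℂ)⁻¹ * eigSum F (A n)) atTop
      (𝓝 (((volume Ω).toReal : ℂ)⁻¹ *
        ∫ θ in Ω, ((Fintype.card ρ : ℕ) : ℂ)⁻¹ * eigSum F (f θ)))

/-- `{A_n}_n ∼_σ α I` (constant symbol `α I_s`, `α = 0` being the notion of a
zero-distributed matrix-sequence): the limit of the singular value averages is `F(α)`. -/
def DistributedSVConst (α : ℝ)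
    {ι κ : ℕ → Type} [∀ n, Fintype (ι n)] [∀ n, Fintype (κ n)] [∀ n, DecidableEq (ι n)]
    (A : ∀ n, Matrix (ι n) (κ n) ℂ) : Prop :=
  ∀ F : ℝ → ℂ, Continuous F → HasCompactSupport F →
    Tendsto
      (fun n => ((min (Fintype.card (ι n)) (Fintype.card (κ n)) : ℕ) : ℂ)⁻¹ * svSum F (A n))
      atTop (𝓝 (F α))

/-- `{A_n}_n ∼_λ α I` (constant symbol `α I_s`, `α` real): the limit of the eigenvalue
averages is `F(α)`. -/
def DistributedEigConst (α : ℝ)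
    {ι : ℕ → Type} [∀ n, Fintype (ι n)] [∀ n, DecidableEq (ι n)]
    (A : ∀ n, Matrix (ι n) (ι n) ℂ) : Prop :=
  ∀ F : ℂ → ℂ, Continuous F → HasCompactSupport F →
    Tendsto (fun n => ((Fintype.card (ι n) : ℕ) : ℂ)⁻¹ * eigSum F (A n)) atTop
      (𝓝 (F (α : ℂ)))

/-- The `k`-th Fourier coefficient (computed entrywise) of a matrix-valued function on
`[-π, π]`: `f̂_k = (1/2π) ∫_{-π}^{π} f(θ) e^{-ικθ} dθ`. -/
def fCoeff {ρ τ : Type*} (f : ℝ → Matrix ρ τ ℂ) (k : ℤ) : Matrix ρ τ ℂ :=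
  Matrix.of fun a b =>
    ((2 * π : ℝ) : ℂ)⁻¹ *
      ∫ θ in (-π : ℝ)..π, f θ a b * Complex.exp (-(Complex.I * (k : ℂ) * (θ : ℂ)))

/-- The (rectangular) block Toeplitz matrix `T_{n,n'}(f) = [f̂_{i-j}]`, of size
`sn × tn'` when `f` is `s × t` matrix-valued. -/
def blockToeplitz {ρ τ : Type*} (f : ℝ → Matrix ρ τ ℂ) (n n' : ℕ) :
    Matrix (Fin n × ρ) (Fin n' × τ) ℂ :=
  Matrix.of fun p q => fCoeff f (((p.1 : ℕ) : ℤ) - ((q.1 : ℕ) : ℤ)) p.2 q.2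

/-!
Let `tr` be the normalised trace. Call `E_n` negligible if `tr (X_n E_n) → 0` for all `X_n` bounded
in operator norm. The semicommutator `T_n(uv) - T_n(u) T_n(v)` is negligible for `u` integrable and
`v` bounded: in `L¹` one may replace `u` by a trigonometric polynomial, for which the semicommutator
has boundedly many nonzero rows. Taking `u = f - ι` and `v = (f - ι)⁻¹`, where `T_n(f) - ι` has an
inverse of norm at most `1` because `T_n(f)` is Hermitian, shows that `(T_n(f) - ι)⁻¹` and
`T_n((f - ι)⁻¹)` differ by a negligible sequence; this handles the unbounded symbol `f` without any
truncation. Having a bounded symbol up to a negligible sequence is stable under `*`-algebra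
operations and uniform limits. By Stone–Weierstrass the resolvent function `(x - ι)⁻¹` generates
all continuous functions on the one-point compactification of `ℝ`, so `F(T_n(f))` has symbol
`F(f)` for each of these, and it remains to take the trace.
-/

/-! ### Normalised Lebesgue measure and `L¹` density of trigonometric polynomials -/

/-- Normalised Lebesgue measure on `[-π, π]`. -/
def angleMeasure : Measure ℝ := ProbabilityTheory.cond volume (Set.Ioc (-π) π)

instance : IsProbabilityMeasure angleMeasure :=
  ProbabilityTheory.cond_isProbabilityMeasure_of_finite
    (by simp [Real.pi_pos]) measure_Ioc_lt_top.ne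

theorem angleMeasure_eq_smul_restrict :
    angleMeasure = (ENNReal.ofReal (2 * π))⁻¹ • volume.restrict (Set.Ioc (-π) π) := by
  rw [angleMeasure, ProbabilityTheory.cond, Real.volume_Ioc, sub_neg_eq_add, two_mul]

theorem ae_angleMeasure_iff {p : ℝ → Prop} :
    (∀ᵐ θ ∂angleMeasure, p θ) ↔ ∀ᵐ θ ∂volume.restrict (Set.Icc (-π) π), p θ := by
  rw [angleMeasure_eq_smul_restrict,
    Measure.ae_ennreal_smul_measure_iff (ENNReal.inv_ne_zero.2 ENNReal.ofReal_ne_top),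
    Measure.restrict_congr_set Ioc_ae_eq_Icc]

theorem integrable_angleMeasure_iff {h : ℝ → ℂ} :
    Integrable h angleMeasure ↔ IntervalIntegrable h volume (-π) π := by
  rw [angleMeasure_eq_smul_restrict,
    integrable_smul_measure (ENNReal.inv_ne_zero.2 ENNReal.ofReal_ne_top)
      (by simp [Real.pi_pos]),
    intervalIntegrable_iff_integrableOn_Ioc_of_le (by linarith [Real.pi_pos]), IntegrableOn]

theorem integral_angleMeasure {E : Type*} [NormedAddCommGroup E] [NormedSpace ℝ E] (h : ℝ → E) :
    ∫ θ, h θ ∂angleMeasure = (2 * π)⁻¹ • ∫ θ in (-π : ℝ)..π, h θ := by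
  rw [angleMeasure_eq_smul_restrict, integral_smul_measure,
    intervalIntegral.integral_of_le (by linarith [Real.pi_pos]), ENNReal.toReal_inv,
    ENNReal.toReal_ofReal (by positivity)]

theorem exists_span_fourier_integral_norm_sub_le {T : ℝ} [Fact (0 < T)] {u : AddCircle T → ℂ}
    (hu : Integrable u AddCircle.haarAddCircle) {ε : ℝ} (hε : 0 < ε) :
    ∃ q ∈ Submodule.span ℂ (Set.range (fourier : ℤ → C(AddCircle T, ℂ))),
      ∫ x, ‖u x - q x‖ ∂AddCircle.haarAddCircle ≤ ε := by
  obtain ⟨g, hug, hg⟩ := hu.exists_boundedContinuous_integral_sub_le (half_pos hε)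
  have hdense : g.toContinuousMap ∈
      closure (Submodule.span ℂ (Set.range (fourier : ℤ → C(AddCircle T, ℂ))) :
        Set C(AddCircle T, ℂ)) := by
    rw [← Submodule.topologicalClosure_coe, span_fourier_closure_eq_top]
    trivial
  obtain ⟨q, hq, hgq⟩ := Metric.mem_closure_iff.1 hdense (ε / 2) (half_pos hε)
  refine ⟨q, hq, ?_⟩
  have hsup : ∀ x, ‖g x - q x‖ ≤ ε / 2 := fun x => by
    rw [← dist_eq_norm]
    exact (ContinuousMap.dist_apply_le_dist x).trans hgq.le
  have hint : Integrable (fun x => ‖u x - g x‖) AddCircle.haarAddCircle := (hu.sub hg).norm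
  calc ∫ x, ‖u x - q x‖ ∂AddCircle.haarAddCircle
      ≤ ∫ x, (‖u x - g x‖ + ε / 2) ∂AddCircle.haarAddCircle :=
        integral_mono_of_nonneg (.of_forall fun x => norm_nonneg _)
          (hint.add (integrable_const _))
          (.of_forall fun x => (norm_sub_le_norm_sub_add_norm_sub _ (g x) _).trans
            (add_le_add le_rfl (hsup x)))
    _ ≤ ε := by
        rw [integral_add hint (integrable_const _), integral_const, probReal_univ, one_smul]
        linarith

instance : Fact (0 < 2 * π) := ⟨Real.two_pi_pos⟩

theorem exists_span_fourier_integral_angleMeasure_le {h : ℝ → ℂ}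
    (hh : Integrable h angleMeasure) {ε : ℝ} (hε : 0 < ε) :
    ∃ q ∈ Submodule.span ℂ (Set.range (fourier : ℤ → C(AddCircle (2 * π), ℂ))),
      ∫ θ, ‖h θ - q (θ : AddCircle (2 * π))‖ ∂angleMeasure ≤ ε := by
  have hend : -π + 2 * π = π := by ring
  have hlift : Integrable (AddCircle.liftIoc (2 * π) (-π) h) AddCircle.haarAddCircle := by
    have hon : IntegrableOn h (Set.Ioc (-π) (-π + 2 * π)) := by
      rw [hend, ← intervalIntegrable_iff_integrableOn_Ioc_of_le (by linarith [Real.pi_pos])]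
      exact integrable_angleMeasure_iff.1 hh
    exact memLp_one_iff_integrable.1
      (memLp_one_iff_integrable.2 hon).memLp_liftIoc.haarAddCircle
  obtain ⟨q, hq, hle⟩ := exists_span_fourier_integral_norm_sub_le hlift hε
  refine ⟨q, hq, le_of_eq_of_le ?_ hle⟩
  rw [integral_angleMeasure, AddCircle.integral_haarAddCircle,
    ← AddCircle.intervalIntegral_preimage (2 * π) (-π), hend]
  congr 1
  refine intervalIntegral.integral_congr_ae (.of_forall fun θ hθ => ?_)
  rw [Set.uIoc_of_le (by linarith [Real.pi_pos])] at hθ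
  rw [AddCircle.liftIoc_coe_apply (by rwa [hend])]

section Matrix

open scoped Matrix.Norms.L2Operator

section OperatorNorm

variable {ι : Type*} [Fintype ι] [DecidableEq ι]

theorem norm_apply_le_l2_opNorm (A : Matrix ι ι ℂ) (i j : ι) : ‖A i j‖ ≤ ‖A‖ := by
  have h := A.l2_opNorm_mulVec (EuclideanSpace.single j 1)
  rw [PiLp.norm_single, norm_one, mul_one] at h
  refine le_trans ?_ h
  simpa using PiLp.norm_apply_le (WithLp.toLp 2 (A *ᵥ Pi.single j 1)) i

theorem l2_opNorm_one_le : ‖(1 : Matrix ι ι ℂ)‖ ≤ 1 := by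
  rw [← Matrix.diagonal_one, Matrix.l2_opNorm_diagonal]
  exact (pi_norm_le_iff_of_nonneg zero_le_one).2 fun i => norm_one.le

theorem norm_trace_le (A : Matrix ι ι ℂ) : ‖A.trace‖ ≤ Fintype.card ι * ‖A‖ := by
  simpa [Matrix.trace] using
    norm_sum_le_of_le Finset.univ fun i _ => norm_apply_le_l2_opNorm A i i

theorem norm_trace_mul_le (A B : Matrix ι ι ℂ) :
    ‖(A * B).trace‖ ≤ Fintype.card ι * (‖A‖ * ‖B‖) :=
  (norm_trace_le _).trans (by gcongr; exact norm_mul_le _ _)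

theorem norm_trace_le_of_row_eq_zero (s : Finset ι) {A : Matrix ι ι ℂ}
    (hA : ∀ i ∉ s, A i = 0) : ‖A.trace‖ ≤ s.card * ‖A‖ := by
  have hdiag : A.trace = ∑ i ∈ s, A i i :=
    (Finset.sum_subset (Finset.subset_univ s) fun i _ hi => by simp [hA i hi]).symm
  rw [hdiag]
  simpa using norm_sum_le_of_le s fun i _ => norm_apply_le_l2_opNorm A i i

end OperatorNorm

section Integrable

variable {Ω : Type*} [MeasurableSpace Ω] {μ : Measure Ω} {ι : Type*} [Fintype ι] [DecidableEq ι]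

theorem integrable_matrix_iff {u : Ω → Matrix ι ι ℂ} :
    Integrable u μ ↔ ∀ i j, Integrable (fun x => u x i j) μ := by
  refine ⟨fun hu i j =>
    (LinearMap.toContinuousLinearMap (Matrix.entryLinearMap ℂ ℂ i j)).integrable_comp hu,
    fun hu => ?_⟩
  have hsum : u = fun x => ∑ i, ∑ j, u x i j • Matrix.single i j (1 : ℂ) := by
    ext1 x
    simpa [Matrix.smul_single] using Matrix.matrix_eq_sum_single (u x)
  rw [hsum]
  exact integrable_finsetSum _ fun i _ => integrable_finsetSum _ fun j _ => (hu i j).smul_const _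

theorem integral_linearMap_matrix {F : Type*} [NormedAddCommGroup F] [NormedSpace ℂ F]
    [CompleteSpace F] (L : Matrix ι ι ℂ →ₗ[ℂ] F) {u : Ω → Matrix ι ι ℂ} (hu : Integrable u μ) :
    ∫ x, L (u x) ∂μ = L (∫ x, u x ∂μ) :=
  (LinearMap.toContinuousLinearMap L).integral_comp_comm hu

end Integrable

/-! ### Integral representation of block Toeplitz matrices -/

section BlockToeplitz

variable {ρ : Type*} [DecidableEq ρ] {n : ℕ}

theorem fCoeff_const {ρ τ : Type*} (C : Matrix ρ τ ℂ) (k : ℤ) :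
    fCoeff (fun _ => C) k = if k = 0 then C else 0 := by
  have horth : ∫ θ in (-π : ℝ)..π, Complex.exp (-(Complex.I * (k : ℂ) * (θ : ℂ))) =
      if k = 0 then 2 * (π : ℂ) else 0 := by
    split_ifs with hk
    · subst hk
      simp [two_mul]
    · have hne : -(Complex.I * (k : ℂ)) ≠ 0 := by simp [hk]
      have hper : Complex.exp (-(Complex.I * (k : ℂ)) * (π : ℝ)) =
          Complex.exp (-(Complex.I * (k : ℂ)) * ((-π : ℝ) : ℂ)) :=
        Complex.exp_eq_exp_iff_exists_int.2 ⟨-k, by push_cast; ring⟩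
      simp_rw [← neg_mul (Complex.I * (k : ℂ))]
      rw [integral_exp_mul_complex hne, hper, sub_self, zero_div]
  ext a b
  simp only [fCoeff, Matrix.of_apply, intervalIntegral.integral_const_mul, horth]
  split_ifs
  · push_cast
    field_simp
  · simp

theorem blockToeplitz_one (n : ℕ) :
    blockToeplitz (fun _ => (1 : Matrix ρ ρ ℂ)) n n = 1 := by
  ext p q
  simp only [blockToeplitz, Matrix.of_apply, fCoeff_const, sub_eq_zero, Nat.cast_inj, Fin.val_inj]
  split_ifs with h <;> simp [Matrix.one_apply, Prod.ext_iff, h]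

/-- The block column `(e^{-ιiθ} I)_{i < n}`, whose adjoint turns a vector of coefficients into
the value at `θ` of the trigonometric polynomial having these coefficients. -/
def fourierFrame (ρ : Type*) [DecidableEq ρ] (n : ℕ) (θ : ℝ) : Matrix (Fin n × ρ) ρ ℂ :=
  Matrix.of fun p a => Complex.exp (-(Complex.I * ((p.1 : ℕ) : ℂ) * (θ : ℂ))) *
    (1 : Matrix ρ ρ ℂ) p.2 a

theorem continuous_fourierFrame (n : ℕ) : Continuous (fourierFrame ρ n) := by
  refine continuous_matrix fun p a => ?_
  simp only [fourierFrame, Matrix.of_apply]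
  fun_prop

variable [Fintype ρ]

theorem conjTranspose_fourierFrame_mul_self (n : ℕ) (θ : ℝ) :
    (fourierFrame ρ n θ)ᴴ * fourierFrame ρ n θ = (n : ℂ) • (1 : Matrix ρ ρ ℂ) := by
  have hunit : ∀ i : ℕ, star (Complex.exp (-(Complex.I * (i : ℂ) * (θ : ℂ)))) *
      Complex.exp (-(Complex.I * (i : ℂ) * (θ : ℂ))) = 1 := fun i => by
    rw [Complex.star_def, ← Complex.exp_conj, ← Complex.exp_add]
    simp
  ext a b
  calc ((fourierFrame ρ n θ)ᴴ * fourierFrame ρ n θ) a b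
      = ∑ _i : Fin n, ∑ c, (1 : Matrix ρ ρ ℂ)ᴴ a c * (1 : Matrix ρ ρ ℂ) c b := by
        rw [Matrix.mul_apply, Fintype.sum_prod_type]
        refine Finset.sum_congr rfl fun i _ => Finset.sum_congr rfl fun c _ => ?_
        simp only [fourierFrame, Matrix.conjTranspose_apply, Matrix.of_apply, star_mul']
        linear_combination (star ((1 : Matrix ρ ρ ℂ) c a) * (1 : Matrix ρ ρ ℂ) c b) * hunit i
    _ = ((n : ℂ) • (1 : Matrix ρ ρ ℂ)) a b := by
        simp_rw [← Matrix.mul_apply, Matrix.conjTranspose_one, mul_one]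
        simp

theorem fourierFrame_mul_mul_conjTranspose_apply (u : Matrix ρ ρ ℂ) (θ : ℝ) (p q : Fin n × ρ) :
    (fourierFrame ρ n θ * u * (fourierFrame ρ n θ)ᴴ) p q =
      u p.2 q.2 * Complex.exp
        (-(Complex.I * ((((p.1 : ℕ) : ℤ) - ((q.1 : ℕ) : ℤ) : ℤ) : ℂ) * (θ : ℂ))) := by
  have hstar : star (Complex.exp (-(Complex.I * ((q.1 : ℕ) : ℂ) * (θ : ℂ)))) =
      Complex.exp (Complex.I * ((q.1 : ℕ) : ℂ) * (θ : ℂ)) := by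
    rw [Complex.star_def, ← Complex.exp_conj]
    simp
  have hexp : Complex.exp
      (-(Complex.I * ((((p.1 : ℕ) : ℤ) - ((q.1 : ℕ) : ℤ) : ℤ) : ℂ) * (θ : ℂ))) =
      Complex.exp (-(Complex.I * ((p.1 : ℕ) : ℂ) * (θ : ℂ))) *
        Complex.exp (Complex.I * ((q.1 : ℕ) : ℂ) * (θ : ℂ)) := by
    rw [← Complex.exp_add]
    push_cast
    ring_nf
  rw [Matrix.mul_apply, hexp]
  simp only [Matrix.mul_apply, fourierFrame, Matrix.conjTranspose_apply, Matrix.of_apply,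
    hstar, Matrix.one_apply, mul_ite, ite_mul, apply_ite star, star_zero,
    mul_one, mul_zero, zero_mul, Finset.sum_ite_eq, Finset.mem_univ, if_true]
  ring

theorem norm_conjTranspose_fourierFrame_mul_mul_le (X : Matrix (Fin n × ρ) (Fin n × ρ) ℂ) (θ : ℝ) :
    ‖(fourierFrame ρ n θ)ᴴ * X * fourierFrame ρ n θ‖ ≤ n * ‖X‖ := by
  have hsq : ‖fourierFrame ρ n θ‖ * ‖fourierFrame ρ n θ‖ ≤ n := by
    rw [← Matrix.l2_opNorm_conjTranspose_mul_self, conjTranspose_fourierFrame_mul_self, norm_smul,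
      Complex.norm_natCast]
    exact mul_le_of_le_one_right n.cast_nonneg l2_opNorm_one_le
  calc ‖(fourierFrame ρ n θ)ᴴ * X * fourierFrame ρ n θ‖
      ≤ ‖(fourierFrame ρ n θ)ᴴ‖ * ‖X‖ * ‖fourierFrame ρ n θ‖ :=
        (Matrix.l2_opNorm_mul _ _).trans (by gcongr; exact Matrix.l2_opNorm_mul _ _)
    _ = ‖fourierFrame ρ n θ‖ * ‖fourierFrame ρ n θ‖ * ‖X‖ := by
        rw [Matrix.l2_opNorm_conjTranspose]
        ring
    _ ≤ n * ‖X‖ := by gcongr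

theorem integrable_fourierFrame_mul_mul {u : ℝ → Matrix ρ ρ ℂ} (hu : Integrable u angleMeasure)
    (n : ℕ) :
    Integrable (fun θ => fourierFrame ρ n θ * u θ * (fourierFrame ρ n θ)ᴴ) angleMeasure := by
  refine integrable_matrix_iff.2 fun p q => ?_
  simp_rw [fourierFrame_mul_mul_conjTranspose_apply]
  refine (integrable_matrix_iff.1 hu p.2 q.2).mul_bdd (c := 1)
    (Continuous.aestronglyMeasurable (by fun_prop)) (.of_forall fun θ => ?_)
  rw [Complex.norm_exp]
  simp

theorem blockToeplitz_eq_integral {u : ℝ → Matrix ρ ρ ℂ} (hu : Integrable u angleMeasure) (n : ℕ) :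
    blockToeplitz u n n =
      ∫ θ, fourierFrame ρ n θ * u θ * (fourierFrame ρ n θ)ᴴ ∂angleMeasure := by
  ext p q
  refine Eq.trans ?_ (integral_linearMap_matrix (Matrix.entryLinearMap ℂ ℂ p q)
    (integrable_fourierFrame_mul_mul hu n))
  simp_rw [Matrix.entryLinearMap_apply, fourierFrame_mul_mul_conjTranspose_apply]
  rw [integral_angleMeasure, Complex.real_smul, Complex.ofReal_inv]
  rfl

theorem trace_mul_blockToeplitz {u : ℝ → Matrix ρ ρ ℂ} (hu : Integrable u angleMeasure)
    (X : Matrix (Fin n × ρ) (Fin n × ρ) ℂ) :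
    (X * blockToeplitz u n n).trace =
      ∫ θ, ((fourierFrame ρ n θ)ᴴ * X * fourierFrame ρ n θ * u θ).trace ∂angleMeasure := by
  rw [blockToeplitz_eq_integral hu]
  refine (integral_linearMap_matrix
    (Matrix.traceLinearMap _ ℂ ℂ ∘ₗ LinearMap.mulLeft ℂ X)
    (integrable_fourierFrame_mul_mul hu n)).symm.trans (integral_congr_ae (.of_forall fun θ => ?_))
  simp only [LinearMap.comp_apply, LinearMap.mulLeft_apply, Matrix.traceLinearMap_apply]
  rw [← Matrix.mul_assoc, Matrix.trace_mul_comm]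
  simp only [Matrix.mul_assoc]

theorem norm_trace_mul_blockToeplitz_le {u : ℝ → Matrix ρ ρ ℂ} (hu : Integrable u angleMeasure)
    (X : Matrix (Fin n × ρ) (Fin n × ρ) ℂ) :
    ‖(X * blockToeplitz u n n).trace‖ ≤
      Fintype.card (Fin n × ρ) * ‖X‖ * ∫ θ, ‖u θ‖ ∂angleMeasure := by
  rw [trace_mul_blockToeplitz hu, ← integral_const_mul]
  refine norm_integral_le_of_norm_le (hu.norm.const_mul _) (.of_forall fun θ => ?_)
  calc _ ≤ Fintype.card ρ * (n * ‖X‖ * ‖u θ‖) :=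
        (norm_trace_mul_le _ _).trans
          (by gcongr; exact norm_conjTranspose_fourierFrame_mul_mul_le X θ)
    _ = Fintype.card (Fin n × ρ) * ‖X‖ * ‖u θ‖ := by
        rw [Fintype.card_prod, Fintype.card_fin]
        push_cast
        ring

theorem trace_blockToeplitz {u : ℝ → Matrix ρ ρ ℂ} (hu : Integrable u angleMeasure) (n : ℕ) :
    (blockToeplitz u n n).trace = n * ∫ θ, (u θ).trace ∂angleMeasure := by
  rw [← one_mul (blockToeplitz u n n), trace_mul_blockToeplitz hu, ← integral_const_mul]
  simp [conjTranspose_fourierFrame_mul_self]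

theorem blockToeplitz_add {u v : ℝ → Matrix ρ ρ ℂ} (hu : Integrable u angleMeasure)
    (hv : Integrable v angleMeasure) (n : ℕ) :
    blockToeplitz (u + v) n n = blockToeplitz u n n + blockToeplitz v n n := by
  rw [blockToeplitz_eq_integral hu, blockToeplitz_eq_integral hv,
    blockToeplitz_eq_integral (hu.add hv), ← integral_add (integrable_fourierFrame_mul_mul hu n)
      (integrable_fourierFrame_mul_mul hv n)]
  simp only [Pi.add_apply, Matrix.mul_add, Matrix.add_mul]

theorem blockToeplitz_smul (c : ℂ) {u : ℝ → Matrix ρ ρ ℂ} (hu : Integrable u angleMeasure)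
    (n : ℕ) : blockToeplitz (c • u) n n = c • blockToeplitz u n n := by
  rw [blockToeplitz_eq_integral hu, blockToeplitz_eq_integral (hu.smul c), ← integral_smul]
  simp only [Pi.smul_apply, Matrix.mul_smul, Matrix.smul_mul]

theorem blockToeplitz_algebraMap (c : ℂ) (n : ℕ) :
    blockToeplitz (fun _ => algebraMap ℂ (Matrix ρ ρ ℂ) c) n n = algebraMap ℂ _ c := by
  have hsmul := blockToeplitz_smul c (integrable_const (1 : Matrix ρ ρ ℂ)) n
  rw [blockToeplitz_one] at hsmul
  simp only [Algebra.algebraMap_eq_smul_one]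
  exact hsmul

theorem blockToeplitz_sub {u v : ℝ → Matrix ρ ρ ℂ} (hu : Integrable u angleMeasure)
    (hv : Integrable v angleMeasure) (n : ℕ) :
    blockToeplitz (u - v) n n = blockToeplitz u n n - blockToeplitz v n n := by
  rw [sub_eq_add_neg, ← neg_one_smul ℂ v, blockToeplitz_add hu (hv.smul _),
    blockToeplitz_smul _ hv, neg_one_smul, sub_eq_add_neg]

theorem blockToeplitz_star {u : ℝ → Matrix ρ ρ ℂ} (hu : Integrable u angleMeasure) (n : ℕ) :
    blockToeplitz (star u) n n = star (blockToeplitz u n n) := by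
  have hstar : Integrable (star u) angleMeasure :=
    ((starL' ℝ).toContinuousLinearMap : Matrix ρ ρ ℂ →L[ℝ] Matrix ρ ρ ℂ).integrable_comp hu
  rw [blockToeplitz_eq_integral hu, blockToeplitz_eq_integral hstar]
  refine Eq.trans ?_ ((starL' ℝ).toContinuousLinearMap.integral_comp_comm
    (integrable_fourierFrame_mul_mul hu n))
  simp [Matrix.star_eq_conjTranspose, Matrix.mul_assoc]

theorem blockToeplitz_congr_ae {u v : ℝ → Matrix ρ ρ ℂ} (hu : Integrable u angleMeasure)
    (huv : u =ᵐ[angleMeasure] v) (n : ℕ) : blockToeplitz u n n = blockToeplitz v n n := by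
  rw [blockToeplitz_eq_integral hu, blockToeplitz_eq_integral (hu.congr huv)]
  refine integral_congr_ae ?_
  filter_upwards [huv] with θ hθ
  rw [hθ]

theorem isHermitian_blockToeplitz {u : ℝ → Matrix ρ ρ ℂ} (hu : Integrable u angleMeasure)
    (hherm : ∀ θ, (u θ).IsHermitian) (n : ℕ) : (blockToeplitz u n n).IsHermitian :=
  (blockToeplitz_star hu n).symm.trans (by rw [show star u = u from funext hherm])

theorem fCoeff_fourier_smul {ρ τ : Type*} (u : ℝ → Matrix ρ τ ℂ) (k m : ℤ) :
    fCoeff (fun θ => fourier k (θ : AddCircle (2 * π)) • u θ) m = fCoeff u (m - k) := by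
  have hexp : ∀ θ : ℝ, fourier k (θ : AddCircle (2 * π)) *
      Complex.exp (-(Complex.I * (m : ℂ) * (θ : ℂ))) =
        Complex.exp (-(Complex.I * ((m - k : ℤ) : ℂ) * (θ : ℂ))) := fun θ => by
    rw [fourier_coe_apply, ← Complex.exp_add]
    congr 1
    push_cast
    field_simp
    ring
  ext a b
  simp only [fCoeff, Matrix.of_apply, Matrix.smul_apply, smul_eq_mul, ← hexp]
  simp only [mul_left_comm, mul_assoc]

/-- The vector-valued trigonometric polynomial `θ ↦ ∑_{i < n} e^{ιiθ} x_i` with coefficient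
vector `x`. -/
def trigPolynomial (x : EuclideanSpace ℂ (Fin n × ρ)) (θ : ℝ) : EuclideanSpace ℂ ρ :=
  WithLp.toLp 2 ((fourierFrame ρ n θ)ᴴ *ᵥ x.ofLp)

theorem continuous_trigPolynomial (x : EuclideanSpace ℂ (Fin n × ρ)) :
    Continuous (trigPolynomial x) :=
  (PiLp.continuous_toLp 2 _).comp
    ((continuous_fourierFrame n).matrix_conjTranspose.matrix_mulVec continuous_const)

theorem integrable_norm_sq_trigPolynomial (x : EuclideanSpace ℂ (Fin n × ρ)) :
    Integrable (fun θ => ‖trigPolynomial x θ‖ ^ 2) angleMeasure := by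
  rw [angleMeasure_eq_smul_restrict]
  exact ((continuous_trigPolynomial x).norm.pow 2).integrableOn_Ioc.smul_measure
    (ENNReal.inv_ne_top.2 (by simp [Real.pi_pos]))

theorem inner_blockToeplitz_mulVec {u : ℝ → Matrix ρ ρ ℂ} (hu : Integrable u angleMeasure)
    (x y : EuclideanSpace ℂ (Fin n × ρ)) :
    inner ℂ x (WithLp.toLp 2 (blockToeplitz u n n *ᵥ y.ofLp)) =
      ∫ θ, inner ℂ (trigPolynomial x θ) (WithLp.toLp 2 (u θ *ᵥ (trigPolynomial y θ).ofLp))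
        ∂angleMeasure := by
  have htrace := trace_mul_blockToeplitz hu (Matrix.vecMulVec y.ofLp (star x.ofLp))
  rw [Matrix.trace_mul_comm, Matrix.mul_vecMulVec, Matrix.trace_vecMulVec] at htrace
  refine htrace.trans (integral_congr_ae (.of_forall fun θ => ?_))
  simp only [trigPolynomial, EuclideanSpace.inner_toLp_toLp]
  rw [Matrix.trace_mul_comm, Matrix.mul_vecMulVec, Matrix.vecMulVec_mul, Matrix.mul_vecMulVec,
    Matrix.trace_vecMulVec, Matrix.star_mulVec, Matrix.conjTranspose_conjTranspose]

theorem integral_norm_sq_trigPolynomial (x : EuclideanSpace ℂ (Fin n × ρ)) :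
    ∫ θ, ‖trigPolynomial x θ‖ ^ 2 ∂angleMeasure = ‖x‖ ^ 2 := by
  have hinner := inner_blockToeplitz_mulVec (integrable_const (1 : Matrix ρ ρ ℂ)) x x
  simp only [blockToeplitz_one, Matrix.one_mulVec, WithLp.toLp_ofLp,
    inner_self_eq_norm_sq_to_K] at hinner
  apply Complex.ofReal_injective
  rw [← integral_complex_ofReal]
  push_cast
  exact hinner.symm

theorem norm_inner_blockToeplitz_mulVec_le {u : ℝ → Matrix ρ ρ ℂ}
    (hu : AEStronglyMeasurable u angleMeasure) {M : ℝ} (hM : ∀ᵐ θ ∂angleMeasure, ‖u θ‖ ≤ M)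
    (x y : EuclideanSpace ℂ (Fin n × ρ)) :
    ‖inner ℂ x (WithLp.toLp 2 (blockToeplitz u n n *ᵥ y.ofLp))‖ ≤
      2⁻¹ * ‖x‖ ^ 2 + 2⁻¹ * M ^ 2 * ‖y‖ ^ 2 := by
  have hx := (integrable_norm_sq_trigPolynomial x).const_mul 2⁻¹
  have hy := (integrable_norm_sq_trigPolynomial y).const_mul (2⁻¹ * M ^ 2)
  rw [inner_blockToeplitz_mulVec (.of_bound hu M hM), ← integral_norm_sq_trigPolynomial x,
    ← integral_norm_sq_trigPolynomial y, ← integral_const_mul, ← integral_const_mul,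
    ← integral_add hx hy]
  refine norm_integral_le_of_norm_le (hx.add hy) ?_
  filter_upwards [hM] with θ hθ
  set a := trigPolynomial x θ
  set b := trigPolynomial y θ
  have huM : ‖WithLp.toLp 2 (u θ *ᵥ b.ofLp)‖ ≤ M * ‖b‖ :=
    ((u θ).l2_opNorm_mulVec b).trans (by gcongr)
  calc _ ≤ ‖a‖ * (M * ‖b‖) := (norm_inner_le_norm _ _).trans (by gcongr)
    _ ≤ _ := by nlinarith [sq_nonneg (‖a‖ - M * ‖b‖)]

theorem norm_blockToeplitz_le {u : ℝ → Matrix ρ ρ ℂ} (hu : AEStronglyMeasurable u angleMeasure)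
    {M : ℝ} (hM : ∀ᵐ θ ∂angleMeasure, ‖u θ‖ ≤ M) (n : ℕ) : ‖blockToeplitz u n n‖ ≤ M := by
  have hM0 : 0 ≤ M := (norm_nonneg _).trans hM.exists.choose_spec
  rw [Matrix.l2_opNorm_def]
  refine ContinuousLinearMap.opNorm_le_bound _ hM0 fun y => ?_
  set Ty : EuclideanSpace ℂ (Fin n × ρ) := WithLp.toLp 2 (blockToeplitz u n n *ᵥ y.ofLp)
  change ‖Ty‖ ≤ M * ‖y‖
  have hsq : ‖Ty‖ ^ 2 ≤ 2⁻¹ * ‖Ty‖ ^ 2 + 2⁻¹ * M ^ 2 * ‖y‖ ^ 2 := by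
    have hinner : ‖inner ℂ Ty Ty‖ ≤ _ := norm_inner_blockToeplitz_mulVec_le hu hM Ty y
    simpa [inner_self_eq_norm_sq_to_K] using hinner
  exact (sq_le_sq₀ (norm_nonneg _) (by positivity)).1 (by nlinarith)

/-! ### Trace-negligible sequences -/

/-- A sequence of matrices `E n` is trace-negligible if the normalised trace of `X n * E n` tends
to `0` for every sequence `X n` bounded in operator norm. This is convergence to `0` in normalised
trace norm, expressed by duality so that no singular values are needed. -/
def IsTraceNegligible {ι : ℕ → Type*} [∀ n, Fintype (ι n)] [∀ n, DecidableEq (ι n)]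
    (E : ∀ n, Matrix (ι n) (ι n) ℂ) : Prop :=
  ∀ X : ∀ n, Matrix (ι n) (ι n) ℂ, (∃ C, ∀ n, ‖X n‖ ≤ C) →
    Tendsto (fun n => (Fintype.card (ι n) : ℂ)⁻¹ * (X n * E n).trace) atTop (𝓝 0)

namespace IsTraceNegligible

variable {ι : ℕ → Type*} [∀ n, Fintype (ι n)] [∀ n, DecidableEq (ι n)]
  {E E' B : ∀ n, Matrix (ι n) (ι n) ℂ}

theorem zero : IsTraceNegligible (0 : ∀ n, Matrix (ι n) (ι n) ℂ) := fun X _ => by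
  simp

theorem add (hE : IsTraceNegligible E) (hE' : IsTraceNegligible E') :
    IsTraceNegligible (E + E') := fun X hX => by
  simpa [Matrix.mul_add, mul_add] using (hE X hX).add (hE' X hX)

theorem const_smul (hE : IsTraceNegligible E) (c : ℂ) : IsTraceNegligible (c • E) := fun X hX => by
  simpa [mul_left_comm] using (hE X hX).const_mul c

theorem mul_left (hE : IsTraceNegligible E) (hB : ∃ C, ∀ n, ‖B n‖ ≤ C) :
    IsTraceNegligible (B * E) := fun X ⟨C, hX⟩ => by
  obtain ⟨D, hB⟩ := hB
  have hXB : ∀ n, ‖X n * B n‖ ≤ C * D := fun n => (norm_mul_le _ _).trans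
    (mul_le_mul (hX n) (hB n) (norm_nonneg _) ((norm_nonneg _).trans (hX n)))
  simpa [Matrix.mul_assoc] using hE _ ⟨_, hXB⟩

theorem mul_right (hE : IsTraceNegligible E) (hB : ∃ C, ∀ n, ‖B n‖ ≤ C) :
    IsTraceNegligible (E * B) := fun X ⟨C, hX⟩ => by
  obtain ⟨D, hB⟩ := hB
  have hBX : ∀ n, ‖B n * X n‖ ≤ D * C := fun n => (norm_mul_le _ _).trans
    (mul_le_mul (hB n) (hX n) (norm_nonneg _) ((norm_nonneg _).trans (hB n)))
  refine (hE _ ⟨_, hBX⟩).congr fun n => ?_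
  rw [Pi.mul_apply, Matrix.mul_assoc, Matrix.trace_mul_comm, Matrix.mul_assoc,
    Matrix.trace_mul_comm, Matrix.mul_assoc]

theorem star (hE : IsTraceNegligible E) : IsTraceNegligible (star E) := fun X ⟨C, hX⟩ => by
  have h := (hE (fun n => (X n)ᴴ) ⟨C, fun n => (Matrix.l2_opNorm_conjTranspose _).trans_le (hX n)⟩)
  refine (map_zero (starRingEnd ℂ) ▸ (Complex.continuous_conj.tendsto 0).comp h).congr fun n => ?_
  rw [Function.comp_apply, map_mul, map_inv₀, map_natCast, starRingEnd_apply,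
    ← Matrix.trace_conjTranspose, Matrix.conjTranspose_mul, Matrix.conjTranspose_conjTranspose,
    Matrix.trace_mul_comm]
  rfl

theorem of_forall_approx (h : ∀ η > 0, ∃ E', IsTraceNegligible E' ∧
      ∀ n Y, ‖(Y * (E n - E' n)).trace‖ ≤ Fintype.card (ι n) * ‖Y‖ * η) :
    IsTraceNegligible E := fun X ⟨C, hX⟩ => by
  refine Metric.tendsto_nhds.2 fun ε hε => ?_
  obtain ⟨η, hη, hCη⟩ := exists_pos_mul_lt (half_pos hε) C
  obtain ⟨E', hE', happrox⟩ := h η hη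
  filter_upwards [Metric.tendsto_nhds.1 (hE' X ⟨C, hX⟩) (ε / 2) (half_pos hε)] with n hn
  rw [dist_zero_right] at hn ⊢
  have hC : 0 ≤ C := (norm_nonneg _).trans (hX n)
  have hdiff : ‖(Fintype.card (ι n) : ℂ)⁻¹ * (X n * (E n - E' n)).trace‖ ≤ C * η := by
    rw [norm_mul, norm_inv, Complex.norm_natCast]
    refine inv_mul_le_of_le_mul₀ (Nat.cast_nonneg _) (by positivity) ?_
    grw [happrox n (X n), hX n, mul_assoc]
  have hsplit : (Fintype.card (ι n) : ℂ)⁻¹ * (X n * E n).trace =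
      (Fintype.card (ι n) : ℂ)⁻¹ * (X n * (E n - E' n)).trace +
        (Fintype.card (ι n) : ℂ)⁻¹ * (X n * E' n).trace := by
    rw [← mul_add, ← Matrix.trace_add, ← Matrix.mul_add, sub_add_cancel]
  rw [hsplit]
  exact (norm_add_le_of_le hdiff hn.le).trans_lt (by linarith)

theorem of_row_eq_zero {K : ℕ} {C : ℝ}
    (hcard : Tendsto (fun n => (Fintype.card (ι n) : ℝ)⁻¹) atTop (𝓝 0))
    (s : ∀ n, Finset (ι n)) (hs : ∀ n, (s n).card ≤ K) (hE : ∀ n, ∀ i ∉ s n, E n i = 0)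
    (hC : ∀ n, ‖E n‖ ≤ C) : IsTraceNegligible E := fun X ⟨D, hX⟩ => by
  have hbound : ∀ n, ‖(Fintype.card (ι n) : ℂ)⁻¹ * (X n * E n).trace‖ ≤
      (Fintype.card (ι n) : ℝ)⁻¹ * (K * (C * D)) := fun n => by
    have hC0 : 0 ≤ C := (norm_nonneg _).trans (hC n)
    rw [Matrix.trace_mul_comm, norm_mul, norm_inv, Complex.norm_natCast]
    gcongr
    calc _ ≤ (s n).card * ‖E n * X n‖ := norm_trace_le_of_row_eq_zero (s n) fun i hi => by
          rw [Matrix.mul_apply_eq_vecMul, hE n i hi, Matrix.zero_vecMul]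
      _ ≤ K * (C * D) := by grw [norm_mul_le, hs n, hC n, hX n]
  refine squeeze_zero_norm hbound ?_
  simpa using hcard.mul_const (K * (C * D))

end IsTraceNegligible

/-! ### Semicommutators -/

theorem fCoeff_const_mul (C : Matrix ρ ρ ℂ) {v : ℝ → Matrix ρ ρ ℂ}
    (hv : Integrable v angleMeasure) (m : ℤ) :
    fCoeff (fun θ => C * v θ) m = C * fCoeff v m := by
  have hint : ∀ a b, IntervalIntegrable
      (fun θ => v θ a b * Complex.exp (-(Complex.I * (m : ℂ) * (θ : ℂ)))) volume (-π) π :=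
    fun a b => (integrable_angleMeasure_iff.1 (integrable_matrix_iff.1 hv a b)).mul_continuousOn
      (by fun_prop)
  ext a b
  simp only [fCoeff, Matrix.of_apply, Matrix.mul_apply, Finset.sum_mul,
    mul_assoc (C a _)]
  rw [intervalIntegral.integral_finsetSum fun c _ => (hint c b).const_mul _, Finset.mul_sum]
  exact Finset.sum_congr rfl fun c _ => by
    rw [intervalIntegral.integral_const_mul, mul_left_comm]

/-- The semicommutator `T_n(uv) - T_n(u) T_n(v)`, measuring the failure of the Toeplitz map to be
multiplicative. -/
def semicommutator (u v : ℝ → Matrix ρ ρ ℂ) (n : ℕ) : Matrix (Fin n × ρ) (Fin n × ρ) ℂ :=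
  blockToeplitz (u * v) n n - blockToeplitz u n n * blockToeplitz v n n

section Semicommutator

variable {u u' v : ℝ → Matrix ρ ρ ℂ} {M : ℝ}

theorem semicommutator_add (hu : Integrable u angleMeasure) (hu' : Integrable u' angleMeasure)
    (hv : AEStronglyMeasurable v angleMeasure) (hM : ∀ᵐ θ ∂angleMeasure, ‖v θ‖ ≤ M) :
    semicommutator (u + u') v = semicommutator u v + semicommutator u' v := by
  have huv : Integrable (u * v) angleMeasure := hu.mul_bdd hv hM
  have huv' : Integrable (u' * v) angleMeasure := hu'.mul_bdd hv hM
  ext1 n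
  simp only [semicommutator, Pi.add_apply]
  rw [add_mul, blockToeplitz_add huv huv', blockToeplitz_add hu hu', add_mul, add_sub_add_comm]

theorem semicommutator_smul (c : ℂ) (hu : Integrable u angleMeasure)
    (hv : AEStronglyMeasurable v angleMeasure) (hM : ∀ᵐ θ ∂angleMeasure, ‖v θ‖ ≤ M) :
    semicommutator (c • u) v = c • semicommutator u v := by
  have huv : Integrable (u * v) angleMeasure := hu.mul_bdd hv hM
  ext1 n
  simp only [semicommutator, Pi.smul_apply]
  rw [smul_mul_assoc, blockToeplitz_smul c huv, blockToeplitz_smul c hu, smul_mul_assoc, smul_sub]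

theorem semicommutator_zero_left {ρ : Type*} [Fintype ρ] (v : ℝ → Matrix ρ ρ ℂ) :
    semicommutator 0 v = 0 := by
  have hzero : ∀ n, blockToeplitz (0 : ℝ → Matrix ρ ρ ℂ) n n = 0 := fun n => by
    ext p q
    simp [blockToeplitz, fCoeff]
  ext1 n
  simp [semicommutator, hzero]

theorem norm_trace_mul_semicommutator_le (hu : Integrable u angleMeasure)
    (hv : AEStronglyMeasurable v angleMeasure) (hM : ∀ᵐ θ ∂angleMeasure, ‖v θ‖ ≤ M)
    (X : Matrix (Fin n × ρ) (Fin n × ρ) ℂ) :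
    ‖(X * semicommutator u v n).trace‖ ≤
      Fintype.card (Fin n × ρ) * ‖X‖ * (2 * M * ∫ θ, ‖u θ‖ ∂angleMeasure) := by
  have huv : Integrable (u * v) angleMeasure := hu.mul_bdd hv hM
  have hprod : ∫ θ, ‖(u * v) θ‖ ∂angleMeasure ≤ M * ∫ θ, ‖u θ‖ ∂angleMeasure := by
    rw [← integral_const_mul]
    refine integral_mono_ae huv.norm (hu.norm.const_mul M) ?_
    filter_upwards [hM] with θ hθ
    grw [Pi.mul_apply, norm_mul_le, hθ, mul_comm]
  have hfactor : ‖blockToeplitz v n n * X‖ ≤ M * ‖X‖ := by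
    grw [norm_mul_le, norm_blockToeplitz_le hv hM]
  have hbound := norm_trace_mul_blockToeplitz_le huv X
  rw [semicommutator, Matrix.mul_sub, Matrix.trace_sub, ← Matrix.mul_assoc,
    Matrix.trace_mul_comm _ (blockToeplitz v n n), ← Matrix.mul_assoc]
  calc _ ≤ Fintype.card (Fin n × ρ) * ‖X‖ * (M * ∫ θ, ‖u θ‖ ∂angleMeasure) +
        Fintype.card (Fin n × ρ) * (M * ‖X‖) * ∫ θ, ‖u θ‖ ∂angleMeasure :=
        norm_sub_le_of_le (hbound.trans (by gcongr))
          ((norm_trace_mul_blockToeplitz_le hu _).trans (by gcongr))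
    _ = _ := by ring

/-- The blocks `i` for which `i - k` leaves `{0, …, n - 1}`; outside of these, multiplication by
`e^{ιkθ}` acts on the rows of a Toeplitz matrix as a shift. -/
def boundaryBlocks (n : ℕ) (k : ℤ) : Finset (Fin n) :=
  Finset.univ.filter fun i => ¬ (0 ≤ (i : ℤ) - k ∧ (i : ℤ) - k < n)

theorem card_boundaryBlocks_le (n : ℕ) (k : ℤ) : (boundaryBlocks n k).card ≤ k.natAbs := by
  rw [← Finset.card_range k.natAbs]
  refine Finset.card_le_card_of_injOn (fun i => if 0 ≤ k then (i : ℕ) else n - 1 - i)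
    (fun i hi => ?_) fun i _ j _ hij => ?_
  · simp only [boundaryBlocks, Finset.coe_filter, Finset.mem_univ, true_and,
      Set.mem_ofPred_eq] at hi
    simp only [Finset.coe_range, Set.mem_Iio]
    split_ifs <;> omega
  · ext
    simp only at hij
    split_ifs at hij <;> omega

theorem semicommutator_fourier_smul_const_row_eq_zero (k : ℤ) (C : Matrix ρ ρ ℂ)
    (hv : Integrable v angleMeasure) {p : Fin n × ρ} (hp : p.1 ∉ boundaryBlocks n k) :
    semicommutator (fun θ => fourier k (θ : AddCircle (2 * π)) • C) v n p = 0 := by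
  simp only [boundaryBlocks, Finset.mem_filter, Finset.mem_univ, true_and, not_not] at hp
  obtain ⟨j, hj⟩ : ∃ j : Fin n, (j : ℤ) = p.1 - k :=
    ⟨⟨((p.1 : ℤ) - k).toNat, by omega⟩, by simpa using hp.1⟩
  have hiff : ∀ i : Fin n, (p.1 : ℤ) - i = k ↔ i = j := fun i => by
    rw [Fin.ext_iff, ← Nat.cast_inj (R := ℤ), hj]
    omega
  have hprod : (fun θ : ℝ => fourier k (θ : AddCircle (2 * π)) • C) * v =
      fun θ : ℝ => fourier k (θ : AddCircle (2 * π)) • (C * v θ) := by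
    ext1 θ
    exact smul_mul_assoc _ _ _
  ext q
  simp only [semicommutator, Matrix.sub_apply, Pi.zero_apply, sub_eq_zero, hprod, blockToeplitz,
    Matrix.of_apply, Matrix.mul_apply, fCoeff_fourier_smul, fCoeff_const_mul C hv, fCoeff_const,
    hiff, Fintype.sum_prod_type]
  rw [Finset.sum_eq_single j (fun i _ hi => by simp [hi]) (by simp)]
  simp only [if_true, hj, sub_right_comm _ _ k]

theorem tendsto_inv_card_fin_prod (ρ : Type*) [Fintype ρ] :
    Tendsto (fun n => (Fintype.card (Fin n × ρ) : ℝ)⁻¹) atTop (𝓝 0) := by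
  simpa [mul_comm] using
    (tendsto_inv_atTop_nhds_zero_nat (𝕜 := ℝ)).const_mul (Fintype.card ρ : ℝ)⁻¹

theorem integrable_fourier_smul_const (q : C(AddCircle (2 * π), ℂ)) (C : Matrix ρ ρ ℂ) :
    Integrable (fun θ : ℝ => q (θ : AddCircle (2 * π)) • C) angleMeasure := by
  have hcont : Continuous fun θ : ℝ => q (θ : AddCircle (2 * π)) • C :=
    (q.continuous.comp (AddCircle.continuous_mk' _)).smul continuous_const
  exact .of_bound hcont.aestronglyMeasurable (‖q‖ * ‖C‖) (.of_forall fun θ =>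
    (norm_smul_le _ _).trans (by gcongr; exact q.norm_coe_le_norm _))

theorem isTraceNegligible_semicommutator_fourier_smul_const (k : ℤ) (C : Matrix ρ ρ ℂ)
    (hv : AEStronglyMeasurable v angleMeasure) (hM : ∀ᵐ θ ∂angleMeasure, ‖v θ‖ ≤ M) :
    IsTraceNegligible (semicommutator (fun θ => fourier k (θ : AddCircle (2 * π)) • C) v) := by
  set w : ℝ → Matrix ρ ρ ℂ := fun θ => fourier k (θ : AddCircle (2 * π)) • C
  have hw : Integrable w angleMeasure := integrable_fourier_smul_const (fourier k) C
  have hwC : ∀ θ, ‖w θ‖ ≤ ‖C‖ := fun θ => by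
    simp only [w, norm_smul, fourier_apply, Circle.norm_coe, one_mul, le_refl]
  have hwv : ∀ᵐ θ ∂angleMeasure, ‖(w * v) θ‖ ≤ ‖C‖ * M := by
    filter_upwards [hM] with θ hθ
    grw [Pi.mul_apply, norm_mul_le, hwC θ, hθ]
  refine .of_row_eq_zero (K := k.natAbs * Fintype.card ρ) (C := ‖C‖ * M + ‖C‖ * M)
    (tendsto_inv_card_fin_prod ρ) (fun n => boundaryBlocks n k ×ˢ Finset.univ) (fun n => ?_)
    (fun n p hp => semicommutator_fourier_smul_const_row_eq_zero k C (.of_bound hv M hM)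
      fun h => hp (Finset.mem_product.2 ⟨h, Finset.mem_univ _⟩)) (fun n => ?_)
  · rw [Finset.card_product, Finset.card_univ]
    gcongr
    exact card_boundaryBlocks_le n k
  · have hprod := norm_blockToeplitz_le
      (hw.aestronglyMeasurable.mul hv) hwv n
    refine norm_sub_le_of_le hprod ?_
    grw [norm_mul_le, norm_blockToeplitz_le hw.aestronglyMeasurable (.of_forall hwC) n,
      norm_blockToeplitz_le hv hM n]

theorem isTraceNegligible_semicommutator_span_fourier_smul_const {q : C(AddCircle (2 * π), ℂ)}
    (hq : q ∈ Submodule.span ℂ (Set.range (fourier : ℤ → C(AddCircle (2 * π), ℂ))))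
    (C : Matrix ρ ρ ℂ) (hv : AEStronglyMeasurable v angleMeasure)
    (hM : ∀ᵐ θ ∂angleMeasure, ‖v θ‖ ≤ M) :
    IsTraceNegligible (semicommutator (fun θ => q (θ : AddCircle (2 * π)) • C) v) := by
  induction hq using Submodule.span_induction with
  | mem q hq =>
    obtain ⟨k, rfl⟩ := hq
    exact isTraceNegligible_semicommutator_fourier_smul_const k C hv hM
  | zero =>
    convert semicommutator_zero_left v ▸ IsTraceNegligible.zero using 2
    ext1 θ
    simp
  | add q r _ _ hq hr =>
    have hadd := semicommutator_add (integrable_fourier_smul_const q C)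
      (integrable_fourier_smul_const r C) hv hM
    convert hadd ▸ hq.add hr using 2
    ext1 θ
    simp [add_smul]
  | smul c q _ hq =>
    have hsmul := semicommutator_smul c (integrable_fourier_smul_const q C) hv hM
    convert hsmul ▸ hq.const_smul c using 2
    ext1 θ
    simp [mul_smul]

theorem isTraceNegligible_semicommutator_smul_const {h : ℝ → ℂ} (hh : Integrable h angleMeasure)
    (C : Matrix ρ ρ ℂ) (hv : AEStronglyMeasurable v angleMeasure)
    (hM : ∀ᵐ θ ∂angleMeasure, ‖v θ‖ ≤ M) :
    IsTraceNegligible (semicommutator (fun θ => h θ • C) v) := by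
  have hM0 : 0 ≤ M := (norm_nonneg _).trans hM.exists.choose_spec
  refine .of_forall_approx fun η hη => ?_
  obtain ⟨δ, hδ, hδη⟩ := exists_pos_mul_lt hη (2 * M * ‖C‖)
  obtain ⟨q, hq, hhq⟩ := exists_span_fourier_integral_angleMeasure_le hh hδ
  set w : ℝ → Matrix ρ ρ ℂ := fun θ => q (θ : AddCircle (2 * π)) • C
  have hw : Integrable w angleMeasure := integrable_fourier_smul_const q C
  have hhC : Integrable (fun θ => h θ • C) angleMeasure := hh.smul_const C
  have hdist : ∫ θ, ‖((fun θ => h θ • C) - w) θ‖ ∂angleMeasure ≤ δ * ‖C‖ := by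
    simp only [Pi.sub_apply, w, ← sub_smul, norm_smul]
    rw [integral_mul_const]
    gcongr
  have hsplit := semicommutator_add (hhC.sub hw) hw hv hM
  rw [sub_add_cancel] at hsplit
  refine ⟨_, isTraceNegligible_semicommutator_span_fourier_smul_const hq C hv hM, fun n Y => ?_⟩
  rw [hsplit, Pi.add_apply, add_sub_cancel_right]
  grw [norm_trace_mul_semicommutator_le (hhC.sub hw) hv hM, hdist]
  gcongr
  linarith

theorem isTraceNegligible_semicommutator (hu : Integrable u angleMeasure)
    (hv : AEStronglyMeasurable v angleMeasure) (hM : ∀ᵐ θ ∂angleMeasure, ‖v θ‖ ≤ M) :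
    IsTraceNegligible (semicommutator u v) := by
  have hsum : u = ∑ p : ρ × ρ, fun θ => u θ p.1 p.2 • Matrix.single p.1 p.2 (1 : ℂ) := by
    ext1 θ
    simpa [Finset.sum_apply, Fintype.sum_prod_type, Matrix.smul_single] using
      Matrix.matrix_eq_sum_single (u θ)
  have hentry : ∀ p : ρ × ρ, Integrable (fun θ => u θ p.1 p.2) angleMeasure :=
    fun p => integrable_matrix_iff.1 hu p.1 p.2
  suffices Integrable u angleMeasure ∧ IsTraceNegligible (semicommutator u v) from this.2
  rw [hsum]
  refine Finset.sum_induction _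
    (fun w => Integrable w angleMeasure ∧ IsTraceNegligible (semicommutator w v)) ?_ ?_ ?_
  · rintro w w' ⟨hw, hwv⟩ ⟨hw', hwv'⟩
    exact ⟨hw.add hw', semicommutator_add hw hw' hv hM ▸ hwv.add hwv'⟩
  · exact ⟨integrable_zero _ _ _, semicommutator_zero_left v ▸ .zero⟩
  · exact fun p _ => ⟨(hentry p).smul_const _,
      isTraceNegligible_semicommutator_smul_const (hentry p) _ hv hM⟩

end Semicommutator

/-! ### Matrix sequences with a bounded symbol -/

theorem aestronglyMeasurable_of_forall_approx {Ω E : Type*} [MeasurableSpace Ω] {μ : Measure Ω}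
    [NormedAddCommGroup E] {u : Ω → E}
    (h : ∀ ε > 0, ∃ v, AEStronglyMeasurable v μ ∧ ∀ᵐ x ∂μ, ‖u x - v x‖ ≤ ε) :
    AEStronglyMeasurable u μ := by
  choose v hv huv using fun n : ℕ => h (1 / (n + 1)) Nat.one_div_pos_of_nat
  refine aestronglyMeasurable_of_tendsto_ae atTop hv ?_
  filter_upwards [ae_all_iff.2 huv] with x hx
  refine tendsto_iff_norm_sub_tendsto_zero.2
    (squeeze_zero (fun _ => norm_nonneg _) (fun n => ?_) tendsto_one_div_add_atTop_nhds_zero_nat)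
  exact (norm_sub_rev (v n x) (u x)).trans_le (hx n)

/-- `HasSymbol A a`: the sequence `A` is uniformly bounded and agrees with the block Toeplitz
matrices of the essentially bounded function `a` up to a trace-negligible sequence. -/
structure HasSymbol (A : ∀ n, Matrix (Fin n × ρ) (Fin n × ρ) ℂ) (a : ℝ → Matrix ρ ρ ℂ) :
    Prop where
  aestronglyMeasurable : AEStronglyMeasurable a angleMeasure
  ae_norm_le : ∃ M, ∀ᵐ θ ∂angleMeasure, ‖a θ‖ ≤ M
  norm_le : ∃ C, ∀ n, ‖A n‖ ≤ C
  isTraceNegligible_sub : IsTraceNegligible fun n => A n - blockToeplitz a n n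

namespace HasSymbol

variable {A B : ∀ n, Matrix (Fin n × ρ) (Fin n × ρ) ℂ} {a b : ℝ → Matrix ρ ρ ℂ}

theorem integrable (hA : HasSymbol A a) : Integrable a angleMeasure :=
  let ⟨M, hM⟩ := hA.ae_norm_le
  .of_bound hA.aestronglyMeasurable M hM

theorem algebraMap (ρ : Type*) [Fintype ρ] [DecidableEq ρ] (c : ℂ) :
    HasSymbol (fun _ => algebraMap ℂ _ c) (fun _ => algebraMap ℂ (Matrix ρ ρ ℂ) c) where
  aestronglyMeasurable := aestronglyMeasurable_const
  ae_norm_le := ⟨_, .of_forall fun _ => le_rfl⟩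
  norm_le := ⟨‖c‖, fun n => by
    rw [Algebra.algebraMap_eq_smul_one, norm_smul]
    exact mul_le_of_le_one_right (norm_nonneg c) l2_opNorm_one_le⟩
  isTraceNegligible_sub := by
    simp only [blockToeplitz_algebraMap, sub_self]
    exact .zero

theorem add (hA : HasSymbol A a) (hB : HasSymbol B b) : HasSymbol (A + B) (a + b) where
  aestronglyMeasurable := hA.aestronglyMeasurable.add hB.aestronglyMeasurable
  ae_norm_le := by
    obtain ⟨M, hM⟩ := hA.ae_norm_le
    obtain ⟨N, hN⟩ := hB.ae_norm_le
    exact ⟨M + N, by filter_upwards [hM, hN] with θ hθ hθ' using norm_add_le_of_le hθ hθ'⟩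
  norm_le := by
    obtain ⟨C, hC⟩ := hA.norm_le
    obtain ⟨D, hD⟩ := hB.norm_le
    exact ⟨C + D, fun n => norm_add_le_of_le (hC n) (hD n)⟩
  isTraceNegligible_sub := by
    convert hA.isTraceNegligible_sub.add hB.isTraceNegligible_sub using 1
    ext1 n
    rw [blockToeplitz_add hA.integrable hB.integrable]
    exact add_sub_add_comm _ _ _ _

theorem mul (hA : HasSymbol A a) (hB : HasSymbol B b) : HasSymbol (A * B) (a * b) where
  aestronglyMeasurable := hA.aestronglyMeasurable.mul hB.aestronglyMeasurable
  ae_norm_le := by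
    obtain ⟨M, hM⟩ := hA.ae_norm_le
    obtain ⟨N, hN⟩ := hB.ae_norm_le
    refine ⟨M * N, ?_⟩
    filter_upwards [hM, hN] with θ hθ hθ'
    exact norm_mul_le_of_le hθ hθ'
  norm_le := by
    obtain ⟨C, hC⟩ := hA.norm_le
    obtain ⟨D, hD⟩ := hB.norm_le
    exact ⟨C * D, fun n => norm_mul_le_of_le (hC n) (hD n)⟩
  isTraceNegligible_sub := by
    obtain ⟨M, hM⟩ := hA.ae_norm_le
    obtain ⟨N, hN⟩ := hB.ae_norm_le
    have hsemi := isTraceNegligible_semicommutator hA.integrable hB.aestronglyMeasurable hN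
    convert ((hA.isTraceNegligible_sub.mul_right hB.norm_le).add
      (hB.isTraceNegligible_sub.mul_left
        ⟨M, norm_blockToeplitz_le hA.aestronglyMeasurable hM⟩)).add (hsemi.const_smul (-1)) using 1
    ext1 n
    simp only [Pi.add_apply, Pi.mul_apply, Pi.neg_apply, semicommutator, neg_one_smul]
    noncomm_ring

theorem star (hA : HasSymbol A a) : HasSymbol (star A) (star a) where
  aestronglyMeasurable := hA.aestronglyMeasurable.star
  ae_norm_le := by simpa using hA.ae_norm_le
  norm_le := by simpa using hA.norm_le
  isTraceNegligible_sub := by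
    convert hA.isTraceNegligible_sub.star using 1
    ext1 n
    rw [blockToeplitz_star hA.integrable]
    exact (star_sub _ _).symm

theorem of_forall_approx
    (h : ∀ ε > 0, ∃ B b, HasSymbol B b ∧ (∀ n, ‖A n - B n‖ ≤ ε) ∧
      ∀ᵐ θ ∂angleMeasure, ‖a θ - b θ‖ ≤ ε) : HasSymbol A a := by
  have ha : AEStronglyMeasurable a angleMeasure :=
    aestronglyMeasurable_of_forall_approx fun ε hε =>
      let ⟨_, b, hB, _, hab⟩ := h ε hε
      ⟨b, hB.aestronglyMeasurable, hab⟩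
  refine ⟨ha, ?_, ?_, .of_forall_approx fun η hη => ?_⟩
  · obtain ⟨B, b, hB, -, hab⟩ := h 1 one_pos
    obtain ⟨M, hM⟩ := hB.ae_norm_le
    refine ⟨1 + M, ?_⟩
    filter_upwards [hab, hM] with θ hθ hθ'
    simpa using norm_add_le_of_le hθ hθ'
  · obtain ⟨B, b, hB, hAB, -⟩ := h 1 one_pos
    obtain ⟨C, hC⟩ := hB.norm_le
    exact ⟨1 + C, fun n => by simpa using norm_add_le_of_le (hAB n) (hC n)⟩
  · obtain ⟨B, b, hB, hAB, hab⟩ := h (η / 2) (half_pos hη)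
    refine ⟨_, hB.isTraceNegligible_sub, fun n Y => ?_⟩
    have hint : Integrable (a - b) angleMeasure :=
      .of_bound (ha.sub hB.aestronglyMeasurable) _ hab
    have hT := norm_blockToeplitz_le (ha.sub hB.aestronglyMeasurable) hab n
    have ha' : Integrable a angleMeasure := by simpa using hint.add hB.integrable
    rw [blockToeplitz_sub ha' hB.integrable] at hT
    rw [sub_sub_sub_comm]
    grw [norm_trace_mul_le, norm_sub_le_of_le (hAB n) hT, add_halves, mul_assoc]

theorem tendsto_trace (hA : HasSymbol A a) :
    Tendsto (fun n => (Fintype.card (Fin n × ρ) : ℂ)⁻¹ * (A n).trace) atTop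
      (𝓝 ((Fintype.card ρ : ℂ)⁻¹ * ∫ θ, (a θ).trace ∂angleMeasure)) := by
  have hlim := (hA.isTraceNegligible_sub 1 ⟨1, fun n => l2_opNorm_one_le⟩).add_const
    ((Fintype.card ρ : ℂ)⁻¹ * ∫ θ, (a θ).trace ∂angleMeasure)
  rw [zero_add] at hlim
  refine hlim.congr' ?_
  filter_upwards [eventually_ne_atTop 0] with n hn
  rw [Pi.one_apply, Matrix.one_mul, Matrix.trace_sub, trace_blockToeplitz hA.integrable,
    Fintype.card_prod, Fintype.card_fin]
  push_cast
  field_simp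
  ring

end HasSymbol

/-! ### Functional calculus of Hermitian matrices -/

section HermitianCalculus

variable {ι : Type*} [Fintype ι] [DecidableEq ι] {A : Matrix ι ι ℂ}

/-- The functional calculus `F ↦ U diag(F(λ_i)) Uᴴ` of a Hermitian matrix `A = U diag(λ_i) Uᴴ`,
for complex-valued functions on the real line. No continuity is asked of `F`, since the spectrum
is finite. -/
def hermitianCalculus (hA : A.IsHermitian) : (ℝ → ℂ) →⋆ₐ[ℂ] Matrix ι ι ℂ where
  toAlgHom := (Unitary.conjStarAlgAut ℂ _ hA.eigenvectorUnitary).toAlgEquiv.toAlgHom.comp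
    ((Matrix.diagonalAlgHom ℂ).comp
      (AlgHom.pi fun i => Pi.evalAlgHom ℂ (fun _ : ℝ => ℂ) (hA.eigenvalues i)))
  map_star' F := (congrArg (Unitary.conjStarAlgAut ℂ _ hA.eigenvectorUnitary)
    (Matrix.diagonal_conjTranspose (F ∘ hA.eigenvalues)).symm).trans (map_star _ _)

theorem hermitianCalculus_apply (hA : A.IsHermitian) (F : ℝ → ℂ) :
    hermitianCalculus hA F = hA.eigenvectorUnitary * Matrix.diagonal (F ∘ hA.eigenvalues) *
      star (hA.eigenvectorUnitary : Matrix ι ι ℂ) :=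
  rfl

theorem hermitianCalculus_ofReal (hA : A.IsHermitian) :
    hermitianCalculus hA (fun x => (x : ℂ)) = A :=
  hA.spectral_theorem.symm

theorem trace_hermitianCalculus (hA : A.IsHermitian) (F : ℂ → ℂ) :
    (hermitianCalculus hA fun x => F x).trace = eigSum F A := by
  rw [hermitianCalculus_apply, Matrix.trace_mul_comm, ← Matrix.mul_assoc,
    Unitary.coe_star_mul_self, Matrix.one_mul, Matrix.trace_diagonal, eigSum,
    hA.roots_charpoly_eq_eigenvalues, Multiset.map_map]
  rfl

theorem norm_hermitianCalculus_le (hA : A.IsHermitian) {F : ℝ → ℂ} {C : ℝ} (hC : 0 ≤ C)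
    (hF : ∀ x, ‖F x‖ ≤ C) : ‖hermitianCalculus hA F‖ ≤ C := by
  rw [hermitianCalculus_apply, ← Unitary.coe_star, CStarRing.norm_mul_coe_unitary,
    CStarRing.norm_coe_unitary_mul, Matrix.l2_opNorm_diagonal]
  exact (pi_norm_le_iff_of_nonneg hC).2 fun i => hF _

theorem norm_hermitianCalculus_sub_le (hA : A.IsHermitian) {F G : ℝ → ℂ} {C : ℝ} (hC : 0 ≤ C)
    (hFG : ∀ x, ‖F x - G x‖ ≤ C) : ‖hermitianCalculus hA F - hermitianCalculus hA G‖ ≤ C := by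
  rw [← map_sub]
  exact norm_hermitianCalculus_le hA hC hFG

end HermitianCalculus

theorem aestronglyMeasurable_matrix_inv {Ω ι : Type*} [MeasurableSpace Ω] {μ : Measure Ω}
    [Fintype ι] [DecidableEq ι] {u : Ω → Matrix ι ι ℂ} (hu : AEStronglyMeasurable u μ) :
    AEStronglyMeasurable (fun x => (u x)⁻¹) μ := by
  simp_rw [Matrix.inv_def, Ring.inverse_eq_inv']
  have hdet := continuous_id.matrix_det.comp_aestronglyMeasurable hu
  exact hdet.aemeasurable.inv.aestronglyMeasurable.smul
    (continuous_id.matrix_adjugate.comp_aestronglyMeasurable hu)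

section Resolvent

/-- The resolvent function `x ↦ (x - ι)⁻¹`, a single function which separates the points of the
one-point compactification of the real line. -/
def resolventFun (x : ℝ) : ℂ := ((x : ℂ) - Complex.I)⁻¹

theorem ofReal_sub_I_ne_zero (x : ℝ) : (x : ℂ) - Complex.I ≠ 0 := fun h => by
  simpa using congrArg Complex.im h

theorem norm_resolventFun_le_one (x : ℝ) : ‖resolventFun x‖ ≤ 1 := by
  rw [resolventFun, norm_inv]
  refine inv_le_one_of_one_le₀ ?_
  simpa using Complex.abs_im_le_norm ((x : ℂ) - Complex.I)

variable {ι : Type*} [Fintype ι] [DecidableEq ι] {A : Matrix ι ι ℂ}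

theorem hermitianCalculus_ofReal_sub_I (hA : A.IsHermitian) :
    hermitianCalculus hA (fun x => (x : ℂ) - Complex.I) = A - algebraMap ℂ _ Complex.I :=
  (map_sub (hermitianCalculus hA) (fun x : ℝ => (x : ℂ))
      (algebraMap ℂ (ℝ → ℂ) Complex.I)).trans
    (by rw [hermitianCalculus_ofReal, AlgHomClass.commutes])

theorem hermitianCalculus_resolventFun_mul (hA : A.IsHermitian) :
    hermitianCalculus hA resolventFun * (A - algebraMap ℂ _ Complex.I) = 1 := by
  rw [← hermitianCalculus_ofReal_sub_I hA, ← map_mul, ← map_one (hermitianCalculus hA)]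
  exact congrArg _ (funext fun x => inv_mul_cancel₀ (ofReal_sub_I_ne_zero x))

end Resolvent

theorem hasSymbol_hermitianCalculus_resolventFun {f : ℝ → Matrix ρ ρ ℂ}
    (hf : Integrable f angleMeasure) (hherm : ∀ θ, (f θ).IsHermitian) :
    HasSymbol (fun n => hermitianCalculus (isHermitian_blockToeplitz hf hherm n) resolventFun)
      (fun θ => hermitianCalculus (hherm θ) resolventFun) := by
  set z : ℝ → Matrix ρ ρ ℂ := fun _ => algebraMap ℂ _ Complex.I
  set R : ∀ n, Matrix (Fin n × ρ) (Fin n × ρ) ℂ :=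
    fun n => hermitianCalculus (isHermitian_blockToeplitz hf hherm n) resolventFun
  set r : ℝ → Matrix ρ ρ ℂ := fun θ => hermitianCalculus (hherm θ) resolventFun
  have hfz : Integrable (f - z) angleMeasure := hf.sub (integrable_const _)
  have hrM : ∀ᵐ θ ∂angleMeasure, ‖r θ‖ ≤ 1 := .of_forall fun θ =>
    norm_hermitianCalculus_le (hherm θ) zero_le_one norm_resolventFun_le_one
  have hRM : ∀ n, ‖R n‖ ≤ 1 := fun n =>
    norm_hermitianCalculus_le _ zero_le_one norm_resolventFun_le_one
  have hinv : r = fun θ => ((f - z) θ)⁻¹ := funext fun θ =>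
    (Matrix.inv_eq_left_inv (hermitianCalculus_resolventFun_mul (hherm θ))).symm
  have hr : AEStronglyMeasurable r angleMeasure :=
    hinv ▸ aestronglyMeasurable_matrix_inv hfz.aestronglyMeasurable
  refine ⟨hr, ⟨1, hrM⟩, ⟨1, hRM⟩, ?_⟩
  have hone : (f - z) * r = fun _ => 1 := funext fun θ =>
    mul_eq_one_comm.1 (hermitianCalculus_resolventFun_mul (hherm θ))
  have hsemi : (fun n => R n - blockToeplitz r n n) = R * semicommutator (f - z) r := by
    ext1 n
    have hT : R n * blockToeplitz (f - z) n n = 1 := by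
      rw [blockToeplitz_sub hf (integrable_const _), blockToeplitz_algebraMap]
      exact hermitianCalculus_resolventFun_mul _
    rw [Pi.mul_apply, semicommutator, hone, blockToeplitz_one, mul_sub, mul_one, ← mul_assoc, hT,
      one_mul]
  exact hsemi ▸ (isTraceNegligible_semicommutator hfz hr hrM).mul_left ⟨1, hRM⟩

theorem tendsto_resolventFun_coclosedCompact :
    Tendsto resolventFun (coclosedCompact ℝ) (𝓝 0) := by
  rw [coclosedCompact_eq_cocompact, ← Metric.cobounded_eq_cocompact]
  exact tendsto_inv₀_cobounded.comp ((tendsto_sub_const_cobounded Complex.I).comp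
    Complex.isometry_ofReal.antilipschitz.tendsto_cobounded)

theorem continuous_resolventFun : Continuous resolventFun :=
  (Complex.continuous_ofReal.sub continuous_const).inv₀ ofReal_sub_I_ne_zero

/-- The resolvent function as a continuous function on the one-point compactification of the
real line, with value `0` at infinity. -/
def onePointResolvent : C(OnePoint ℝ, ℂ) :=
  OnePoint.continuousMapMk ⟨resolventFun, continuous_resolventFun⟩ 0
    tendsto_resolventFun_coclosedCompact

theorem onePointResolvent_injective : Function.Injective onePointResolvent := by
  have hne (x : ℝ) : resolventFun x ≠ 0 := inv_ne_zero (ofReal_sub_I_ne_zero x)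
  intro x y h
  induction x using OnePoint.rec <;> induction y using OnePoint.rec
  · rfl
  · exact (hne _ h.symm).elim
  · exact (hne _ h).elim
  · exact congrArg _ (Complex.ofReal_injective (sub_left_injective (inv_injective h)))

theorem topologicalClosure_adjoin_onePointResolvent :
    (StarAlgebra.adjoin ℂ {onePointResolvent}).topologicalClosure = ⊤ :=
  ContinuousMap.starSubalgebra_topologicalClosure_eq_top_of_separatesPoints _ fun _ _ hxy =>
    ⟨_, ⟨_, StarAlgebra.self_mem_adjoin_singleton ℂ onePointResolvent, rfl⟩,
      onePointResolvent_injective.ne hxy⟩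

section FunctionalCalculus

variable {f : ℝ → Matrix ρ ρ ℂ}

theorem hasSymbol_hermitianCalculus_of_mem_adjoin
    (hf : Integrable f angleMeasure) (hherm : ∀ θ, (f θ).IsHermitian) {g : C(OnePoint ℝ, ℂ)}
    (hg : g ∈ StarAlgebra.adjoin ℂ {onePointResolvent}) :
    HasSymbol
      (fun n => hermitianCalculus (isHermitian_blockToeplitz hf hherm n) fun x => g x)
      (fun θ => hermitianCalculus (hherm θ) fun x => g x) := by
  induction hg using StarAlgebra.adjoin_induction with
  | mem g hg =>
    rw [Set.mem_singleton_iff.1 hg]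
    exact hasSymbol_hermitianCalculus_resolventFun hf hherm
  | algebraMap c =>
    convert HasSymbol.algebraMap ρ c using 2
    · exact AlgHomClass.commutes (hermitianCalculus _) c
    · exact AlgHomClass.commutes (hermitianCalculus _) c
  | add g h _ _ hg hh =>
    convert hg.add hh using 2
    · exact map_add (hermitianCalculus _) (fun x : ℝ => g x) (fun x => h x)
    · exact map_add (hermitianCalculus _) (fun x : ℝ => g x) (fun x => h x)
  | mul g h _ _ hg hh =>
    convert hg.mul hh using 2
    · exact map_mul (hermitianCalculus _) (fun x : ℝ => g x) (fun x => h x)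
    · exact map_mul (hermitianCalculus _) (fun x : ℝ => g x) (fun x => h x)
  | star g _ hg =>
    convert hg.star using 2
    · exact map_star (hermitianCalculus _) (fun x : ℝ => g x)
    · exact map_star (hermitianCalculus _) (fun x : ℝ => g x)

theorem hasSymbol_hermitianCalculus
    (hf : Integrable f angleMeasure) (hherm : ∀ θ, (f θ).IsHermitian) (g : C(OnePoint ℝ, ℂ)) :
    HasSymbol
      (fun n => hermitianCalculus (isHermitian_blockToeplitz hf hherm n) fun x => g x)
      (fun θ => hermitianCalculus (hherm θ) fun x => g x) := by
  have hg : g ∈ (StarAlgebra.adjoin ℂ {onePointResolvent}).topologicalClosure :=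
    topologicalClosure_adjoin_onePointResolvent ▸ StarSubalgebra.mem_top
  refine HasSymbol.of_forall_approx fun ε hε => ?_
  obtain ⟨h, hh, hgh⟩ := Metric.mem_closure_iff.1 hg ε hε
  have hsup (x : ℝ) : ‖g x - h x‖ ≤ ε := by
    rw [← dist_eq_norm]
    exact (ContinuousMap.dist_apply_le_dist _).trans hgh.le
  exact ⟨_, _, hasSymbol_hermitianCalculus_of_mem_adjoin hf hherm hh,
    fun n => norm_hermitianCalculus_sub_le _ hε.le hsup,
    .of_forall fun θ => norm_hermitianCalculus_sub_le _ hε.le hsup⟩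

end FunctionalCalculus

/-- The restriction to the real line of a compactly supported continuous function on the complex
plane, extended by `0` to the one-point compactification. -/
def onePointExtension (F : ℂ → ℂ) (hF : Continuous F) (hFc : HasCompactSupport F) :
    C(OnePoint ℝ, ℂ) :=
  OnePoint.continuousMapMk ⟨fun x => F x, hF.comp Complex.continuous_ofReal⟩ 0 <| by
    rw [coclosedCompact_eq_cocompact]
    exact (hFc.comp_isClosedEmbedding
      Complex.isometry_ofReal.isClosedEmbedding).is_zero_at_infty

theorem tendsto_eigSum_blockToeplitz {f : ℝ → Matrix ρ ρ ℂ}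
    (hf : ∀ i j, Integrable (fun θ => f θ i j) angleMeasure)
    (hherm : ∀ᵐ θ ∂angleMeasure, (f θ).IsHermitian) {F : ℂ → ℂ} (hF : Continuous F)
    (hFc : HasCompactSupport F) :
    Tendsto (fun n => (Fintype.card (Fin n × ρ) : ℂ)⁻¹ * eigSum F (blockToeplitz f n n)) atTop
      (𝓝 ((Fintype.card ρ : ℂ)⁻¹ * ∫ θ, eigSum F (f θ) ∂angleMeasure)) := by
  set u : ℝ → Matrix ρ ρ ℂ := fun θ => realPart (f θ)
  have hu (θ : ℝ) : (u θ).IsHermitian := (realPart (f θ)).2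
  have hfu : f =ᵐ[angleMeasure] u := hherm.mono fun θ hθ => (IsSelfAdjoint.coe_realPart hθ).symm
  have hfint : Integrable f angleMeasure := integrable_matrix_iff.2 hf
  have huint : Integrable u angleMeasure := hfint.congr hfu
  have hlim := (hasSymbol_hermitianCalculus huint hu (onePointExtension F hF hFc)).tendsto_trace
  convert hlim using 2 with n
  · rw [blockToeplitz_congr_ae hfint hfu]
    exact congrArg _ (trace_hermitianCalculus _ F).symm
  · congr 1
    refine integral_congr_ae (hfu.mono fun θ hθ => ?_)
    dsimp only
    rw [hθ]
    exact (trace_hermitianCalculus (hu θ) F).symm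

end BlockToeplitz

end Matrix

theorem toeplitz_eig_distribution_general {ρ : Type} [Fintype ρ] [DecidableEq ρ]
    (f : ℝ → Matrix ρ ρ ℂ)
    (hf : ∀ i j, IntervalIntegrable (fun θ => f θ i j) volume (-π) π)
    (hherm : ∀ᵐ θ ∂(volume.restrict (Set.Icc (-π) π)), (f θ).IsHermitian) :
    DistributedEig (Set.Icc (-π) π) f (fun n => blockToeplitz f n n) := by
  intro F hF hFc
  have hint (i j : ρ) : Integrable (fun θ => f θ i j) angleMeasure :=
    integrable_angleMeasure_iff.2 (hf i j)
  have hvol : (volume (Set.Icc (-π) π)).toReal = 2 * π := by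
    rw [Real.volume_Icc, ENNReal.toReal_ofReal (by linarith [Real.pi_pos])]
    ring
  have hpi : -π ≤ π := by linarith [Real.pi_pos]
  convert tendsto_eigSum_blockToeplitz hint (ae_angleMeasure_iff.2 hherm) hF hFc using 2
  rw [hvol, integral_const_mul, mul_left_comm, integral_angleMeasure,
    integral_Icc_eq_integral_Ioc, ← intervalIntegral.integral_of_le hpi, Complex.real_smul,
    Complex.ofReal_inv]

/-- Szegő-type eigenvalue distribution for block Toeplitz matrices:
if `f ∈ L¹([-π,π]; ℂ^{s×s})` is Hermitian-valued for almost every `θ`, then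
`{T_n(f)}_n ∼_λ f`. -/
theorem toeplitz_eig_distribution
    (s : ℕ) (f : ℝ → Matrix (Fin s) (Fin s) ℂ)
    (hf : ∀ i j, IntervalIntegrable (fun θ => f θ i j) volume (-π) π)
    (hherm : ∀ᵐ θ ∂(volume.restrict (Set.Icc (-π) π)), (f θ).IsHermitian) :
    DistributedEig (Set.Icc (-π) π) f (fun n => blockToeplitz f n n) :=
  toeplitz_eig_distribution_general f hf hherm

end
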